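/- Assume there exists a C² positive definite proper function V∞: ℝ^n → ℝ≥0 such that (i) for every χ ∈ ℝ^n \ {0}, L_bV∞(χ) = 0 implies L_aV∞(χ) < 0, and (ii) P∞ := (1/2)·H(V∞)(0) is positive definite. Let K ∈ ℝ^{p×n} be such that A + BK is Hurwitz. If there exist a matrix K_u ∈ ℝ^{p×n} and a positive definite matrix P ∈ ℝ^{n×n} such that (A + BK)ᵀP + P(A + BK), (A + BK_u)ᵀP + P(A + BK_u), and (A + BK_u)ᵀP∞ + P∞(A + BK_u) are all negative definite, then there exists a smooth map α₀: ℝ^n → ℝ^p with α₀(0) = 0 and Dα₀(0) = K such that the origin of dχ/dt = a(χ) + b(χ)α₀(χ) is globally asymptotically stable. -/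

import Mathlib

open Matrix Filter Topology Asymptotics

noncomputable section

/-- `V` is proper: `V χ → ∞` as `‖χ‖ → ∞`. -/
def IsProper {E : Type*} [NormedAddCommGroup E] (V : E → ℝ) : Prop :=
  Filter.Tendsto V (Bornology.cobounded E) Filter.atTop

/-- `V` is positive definite: `V 0 = 0` and `V x > 0` for `x ≠ 0`. -/
def IsPosDefFn {E : Type*} [NormedAddCommGroup E] (V : E → ℝ) : Prop :=
  V 0 = 0 ∧ ∀ x : E, x ≠ 0 → 0 < V x

/-- The Hessian matrix of `V` at `x`. -/
def hessianAt {n : ℕ} (V : (Fin n → ℝ) → ℝ) (x : Fin n → ℝ) :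
    Matrix (Fin n) (Fin n) ℝ :=
  Matrix.of fun i j => iteratedFDeriv ℝ 2 V x ![Pi.single i 1, Pi.single j 1]

/-- A real square matrix is Hurwitz if all of its (complex) eigenvalues have
negative real part. -/
def Hurwitz {ι : Type*} [Fintype ι] [DecidableEq ι] (M : Matrix ι ι ℝ) : Prop :=
  ∀ μ : ℂ, μ ∈ spectrum ℂ (M.map (algebraMap ℝ ℂ)) → μ.re < 0

/-- Global asymptotic stability of the origin for `χ' = F (χ)`:
(i) Lyapunov stability of the origin, and (ii) for every initial condition there is a
solution defined on all of `[0, ∞)` converging to the origin (for a locally Lipschitz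
vector field, by uniqueness of solutions, this is equivalent to requiring every maximal
solution to be defined on `[0,∞)` and to converge to the origin). -/
def IsGAS {E : Type*} [NormedAddCommGroup E] [NormedSpace ℝ E] (F : E → E) : Prop :=
  (∀ ε > 0, ∃ δ > 0, ∀ (χ : ℝ → E) (T : ℝ),
      (∀ t ∈ Set.Ico (0:ℝ) T, HasDerivAt χ (F (χ t)) t) →
      ‖χ 0‖ ≤ δ → ∀ t ∈ Set.Ico (0:ℝ) T, ‖χ t‖ ≤ ε) ∧
  (∀ x₀ : E, ∃ χ : ℝ → E, χ 0 = x₀ ∧ (∀ t : ℝ, 0 ≤ t → HasDerivAt χ (F (χ t)) t) ∧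
      Filter.Tendsto χ Filter.atTop (nhds 0))


/-!
The quadratic form `V = xᵀ P x` is a Lyapunov function for `u = K x` on a small sublevel set
`{V ≤ c}`, and `V∞` is a control Lyapunov function everywhere. The two need not be compatible on
`{V ≤ c}`; there `u = Ku x` bridges them, because near the origin it makes both `V` and `V∞`
decrease. Choose `ε` with `{V∞ ≤ ε} ⊆ {V ≤ c}` and require of the control at `x` that it equal
`K x` near the origin, that it make `V` decrease if `V x ≤ c`, and that it make `V∞` decrease if
`ε ≤ V∞ x`. These constraints are convex in the control value, and near every point some smooth
feedback satisfies them: `K x` where `V∞ < ε`, `Ku x` on a neighbourhood of the rest of `{V ≤ c}`,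
and a constant beyond. A smooth partition of unity glues these local feedbacks. Every solution of
the closed loop then enters `{V∞ ≤ ε}`, hence `{V ≤ c}`, and from there converges to the origin.
-/

section IntegralCurve

open scoped Manifold NNReal

variable {E : Type*} [NormedAddCommGroup E] [NormedSpace ℝ E]

theorem exists_isMIntegralCurveOn_Ioo_of_lipschitzWith_of_bounded [CompleteSpace E] {F : E → E}
    {K L : ℝ≥0} (hF : LipschitzWith K F) (hL : ∀ x, ‖F x‖ ≤ L) (x₀ : E) (T : ℝ) :
    ∃ χ : ℝ → E, χ 0 = x₀ ∧ IsMIntegralCurveOn (I := 𝓘(ℝ, E)) χ F (Set.Ioo (-T) T) := by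
  have h0 : (0 : ℝ) ∈ Set.Icc (-|T|) |T| := by simp
  have hPL : IsPicardLindelof (fun _ => F) (⟨0, h0⟩ : Set.Icc (-|T|) |T|) x₀
      (L * Real.nnabs T) 0 L K :=
    ⟨fun _ _ => hF.lipschitzOnWith, fun _ _ => continuousOn_const, fun _ _ x _ => hL x, by simp⟩
  obtain ⟨χ, hχ0, hχ⟩ := hPL.exists_eq_forall_mem_Icc_hasDerivWithinAt₀
  have hT : Set.Ioo (-T) T ⊆ Set.Icc (-|T|) |T| := fun t ht =>
    ⟨(neg_le_neg (le_abs_self T)).trans ht.1.le, ht.2.le.trans (le_abs_self T)⟩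
  exact ⟨χ, hχ0, fun t ht => ((hχ t (hT ht)).mono hT).hasFDerivWithinAt.hasMFDerivWithinAt⟩

theorem exists_isIntegralCurve_of_hasCompactSupport [CompleteSpace E] {F : E → E}
    (hF : ContDiff ℝ 1 F) (hFs : HasCompactSupport F) (x₀ : E) :
    ∃ χ : ℝ → E, χ 0 = x₀ ∧ IsIntegralCurve χ (fun _ => F) := by
  obtain ⟨K, hK⟩ := hF.lipschitzWith_of_hasCompactSupport hFs one_ne_zero
  obtain ⟨L, hL⟩ := hFs.exists_bound_of_continuous hF.continuous
  lift L to ℝ≥0 using (norm_nonneg _).trans (hL 0)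
  obtain ⟨χ, hχ0, hχ⟩ := (exists_isMIntegralCurve_iff_exists_isMIntegralCurveOn_Ioo
    (contMDiff_vectorSpace_iff_contDiff.2 hF) x₀).2
    (exists_isMIntegralCurveOn_Ioo_of_lipschitzWith_of_bounded hK hL x₀)
  exact ⟨χ, hχ0, fun t => (hχ t).hasFDerivAt⟩

theorem exists_contDiff_hasCompactSupport_eqOn [FiniteDimensional ℝ E] {G : Type*}
    [NormedAddCommGroup G] [NormedSpace ℝ G] {k : ℕ∞} {F : E → G} (hF : ContDiff ℝ k F)
    {S : Set E} (hS : IsCompact S) :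
    ∃ F' : E → G, ContDiff ℝ k F' ∧ HasCompactSupport F' ∧ Set.EqOn F' F S := by
  obtain ⟨r, hr, hSr⟩ := hS.isBounded.subset_closedBall_lt 0 (0 : E)
  let φ : ContDiffBump (0 : E) := ⟨r, r + 1, hr, lt_add_one r⟩
  refine ⟨fun x => φ x • F x, φ.contDiff.smul hF, φ.hasCompactSupport.smul_right, fun x hx => ?_⟩
  simp only [φ.one_of_mem_closedBall (hSr hx), one_smul]

end IntegralCurve

section Lyapunov

variable {E : Type*} [NormedAddCommGroup E] {V : E → ℝ}

theorem IsProper.isCompact_setOf_le [ProperSpace E] (hp : IsProper V) (hV : Continuous V) (c : ℝ) :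
    IsCompact {x | V x ≤ c} := by
  refine Metric.isCompact_of_isClosed_isBounded (isClosed_le hV continuous_const) ?_
  rw [Bornology.isBounded_def]
  filter_upwards [hp.eventually_gt_atTop c] with x hx using not_le.2 hx

variable [NormedSpace ℝ E] {W : E → ℝ} {F : E → E} {χ : ℝ → E} {c r s T : ℝ}

/-- The Lie derivative `L_F V` of a function `V` along a vector field `F`. -/
def lieDeriv (V : E → ℝ) (F : E → E) (x : E) : ℝ :=
  fderiv ℝ V x (F x)

theorem hasDerivAt_comp_lieDeriv {t : ℝ} (hV : DifferentiableAt ℝ V (χ t))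
    (hχ : HasDerivAt χ (F (χ t)) t) : HasDerivAt (fun τ => V (χ τ)) (lieDeriv V F (χ t)) t :=
  hV.hasFDerivAt.comp_hasDerivAt t hχ

theorem continuous_lieDeriv (hV : ContDiff ℝ 1 V) (hF : Continuous F) :
    Continuous (lieDeriv V F) :=
  (hV.continuous_fderiv one_ne_zero).clm_apply hF

theorem le_of_lieDeriv_neg_of_eq (hV : Differentiable ℝ V)
    (hneg : ∀ x, V x = c → lieDeriv V F x < 0)
    (hχ : ∀ t ∈ Set.Ico s T, HasDerivAt χ (F (χ t)) t) (hs : V (χ s) ≤ c) :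
    ∀ t ∈ Set.Ico s T, V (χ t) ≤ c := by
  intro t ht
  have hderiv : ∀ τ ∈ Set.Icc s t, HasDerivAt (fun τ => V (χ τ)) (lieDeriv V F (χ τ)) τ :=
    fun τ hτ => hasDerivAt_comp_lieDeriv (hV _) (hχ τ ⟨hτ.1, hτ.2.trans_lt ht.2⟩)
  exact image_le_of_deriv_right_lt_deriv_boundary'
    (fun τ hτ => (hderiv τ hτ).continuousAt.continuousWithinAt)
    (fun τ hτ => (hderiv τ (Set.Ico_subset_Icc_self hτ)).hasDerivWithinAt) hs
    continuousOn_const (fun _ _ => hasDerivWithinAt_const _ _ _) (fun τ _ => hneg (χ τ))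
    ⟨ht.1, le_rfl⟩

theorem exists_le_of_hasDerivAt_le_neg {f f' : ℝ → ℝ} {k : ℝ} (hk : 0 < k)
    (hf : ∀ t, s ≤ t → HasDerivAt f (f' t) t) (hf' : ∀ t, s ≤ t → c < f t → f' t ≤ -k) :
    ∃ t, s ≤ t ∧ f t ≤ c := by
  by_contra! hc
  have hsc : 0 ≤ (f s - c) / k := div_nonneg (sub_nonneg.2 (hc s le_rfl).le) hk.le
  have hdecay : f (s + (f s - c) / k) - f s ≤ -k * (s + (f s - c) / k - s) := by
    refine (convex_Ici s).image_sub_le_mul_sub_of_deriv_le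
      (fun t ht => (hf t ht).continuousAt.continuousWithinAt)
      (fun t ht => (hf t (interior_subset ht)).differentiableAt.differentiableWithinAt)
      (fun t ht => ?_) s Set.self_mem_Ici _ (le_add_of_nonneg_right hsc)
      (le_add_of_nonneg_right hsc)
    rw [(hf t (interior_subset ht)).deriv]
    exact hf' t (interior_subset ht) (hc t (interior_subset ht))
  have hend : -k * (s + (f s - c) / k - s) = c - f s := by field_simp; ring
  linarith [hc _ (le_add_of_nonneg_right hsc)]

theorem eventually_le_of_lieDeriv_neg (hV : ContDiff ℝ 1 V) (hc : IsCompact {x | V x ≤ c})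
    (hF : Continuous F) (hrc : r ≤ c) (hneg : ∀ x, r ≤ V x → V x ≤ c → lieDeriv V F x < 0)
    (hχ : ∀ t, s ≤ t → HasDerivAt χ (F (χ t)) t) (hs : V (χ s) ≤ c) :
    ∀ᶠ t in atTop, V (χ t) ≤ r := by
  have hVd : Differentiable ℝ V := hV.differentiable one_ne_zero
  have hχc : ∀ t, s ≤ t → V (χ t) ≤ c := fun t ht =>
    le_of_lieDeriv_neg_of_eq hVd (fun x hx => hneg x (hrc.trans_eq hx.symm) hx.le)
      (fun τ hτ => hχ τ hτ.1) hs t ⟨ht, lt_add_one t⟩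
  obtain ⟨k, hk, hVk⟩ : ∃ k > 0, ∀ x ∈ {x | V x ≤ c} ∩ {x | r ≤ V x}, k ≤ -lieDeriv V F x :=
    (hc.inter_right (isClosed_le continuous_const hV.continuous)).exists_forall_le'
      (continuous_lieDeriv hV hF).neg.continuousOn (fun x hx => neg_pos.2 (hneg x hx.2 hx.1))
  obtain ⟨t₁, ht₁, hr⟩ : ∃ t₁, s ≤ t₁ ∧ V (χ t₁) ≤ r :=
    exists_le_of_hasDerivAt_le_neg hk (fun t ht => hasDerivAt_comp_lieDeriv (hVd _) (hχ t ht))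
      (fun t ht hrt => le_neg_of_le_neg (hVk (χ t) ⟨hχc t ht, hrt.le⟩))
  filter_upwards [eventually_ge_atTop t₁] with t ht
  exact le_of_lieDeriv_neg_of_eq hVd (fun x hx => hneg x hx.ge (hx.trans_le hrc))
    (fun τ hτ => hχ τ (ht₁.trans hτ.1)) hr t ⟨ht, lt_add_one t⟩

theorem exists_forward_solution [FiniteDimensional ℝ E] (hF : ContDiff ℝ 1 F)
    (hV : Differentiable ℝ V) (hc : IsCompact {x | V x ≤ c})
    (hneg : ∀ x, V x = c → lieDeriv V F x < 0) {x₀ : E} (hx₀ : V x₀ ≤ c) :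
    ∃ χ : ℝ → E, χ 0 = x₀ ∧ ∀ t, 0 ≤ t → HasDerivAt χ (F (χ t)) t := by
  have : CompleteSpace E := FiniteDimensional.complete ℝ E
  obtain ⟨G, hG, hGs, hGF⟩ := exists_contDiff_hasCompactSupport_eqOn hF hc
  obtain ⟨χ, hχ0, hχ⟩ := exists_isIntegralCurve_of_hasCompactSupport hG hGs x₀
  have hGneg : ∀ x, V x = c → lieDeriv V G x < 0 := fun x hx => by
    simpa only [lieDeriv, hGF hx.le] using hneg x hx
  have hχc : ∀ t, 0 ≤ t → V (χ t) ≤ c := fun t ht =>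
    le_of_lieDeriv_neg_of_eq hV hGneg (fun τ _ => hχ τ) (hχ0 ▸ hx₀) t ⟨ht, lt_add_one t⟩
  exact ⟨χ, hχ0, fun t ht => hGF (hχc t ht) ▸ hχ t⟩

/-- A continuously differentiable, proper, positive definite function: the regularity required of
a Lyapunov function, with no vector field involved yet. -/
structure IsLyapunovCandidate (V : E → ℝ) : Prop where
  contDiff : ContDiff ℝ 1 V
  isProper : IsProper V
  isPosDefFn : IsPosDefFn V

namespace IsLyapunovCandidate

theorem differentiable (hV : IsLyapunovCandidate V) : Differentiable ℝ V :=
  hV.contDiff.differentiable one_ne_zero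

theorem eventually_lt (hV : IsLyapunovCandidate V) (hc : 0 < c) : ∀ᶠ x in 𝓝 0, V x < c :=
  hV.contDiff.continuous.continuousAt.eventually_lt_const (hV.isPosDefFn.1.trans_lt hc)

theorem fderiv_zero (hV : IsLyapunovCandidate V) : fderiv ℝ V 0 = 0 := by
  refine IsLocalMin.fderiv_eq_zero (Eventually.of_forall fun x => ?_)
  obtain rfl | hx := eq_or_ne x 0
  exacts [le_rfl, hV.isPosDefFn.1.trans_le (hV.isPosDefFn.2 x hx).le]

variable [FiniteDimensional ℝ E]

theorem isCompact_setOf_le (hV : IsLyapunovCandidate V) (c : ℝ) : IsCompact {x | V x ≤ c} :=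
  have : ProperSpace E := FiniteDimensional.proper ℝ E
  hV.isProper.isCompact_setOf_le hV.contDiff.continuous c

theorem exists_setOf_le_subset (hV : IsLyapunovCandidate V) {U : Set E} (hU : U ∈ 𝓝 0) :
    ∃ r > 0, {x | V x ≤ r} ⊆ U := by
  obtain ⟨m, hm, hVm⟩ : ∃ m > 0, ∀ x ∈ {x | V x ≤ 1} \ interior U, m ≤ V x :=
    ((hV.isCompact_setOf_le 1).diff isOpen_interior).exists_forall_le'
      hV.contDiff.continuous.continuousOn fun x hx => hV.isPosDefFn.2 x fun h =>
        hx.2 (h ▸ mem_interior_iff_mem_nhds.2 hU)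
  obtain ⟨r, hr, hr1m⟩ := exists_between (lt_min one_pos hm)
  refine ⟨r, hr, fun x hx => interior_subset <| by_contra fun hxU => ?_⟩
  have hxr : V x < min 1 m := lt_of_le_of_lt hx hr1m
  exact (hxr.trans_le (min_le_right _ _)).not_ge (hVm x ⟨(hxr.trans_le (min_le_left _ _)).le, hxU⟩)

theorem stable (hV : IsLyapunovCandidate V) (hc : 0 < c)
    (hneg : ∀ x ≠ 0, V x ≤ c → lieDeriv V F x < 0) {ε : ℝ} (hε : 0 < ε) :
    ∃ δ > 0, ∀ (χ : ℝ → E) (T : ℝ), (∀ t ∈ Set.Ico 0 T, HasDerivAt χ (F (χ t)) t) →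
      ‖χ 0‖ ≤ δ → ∀ t ∈ Set.Ico 0 T, ‖χ t‖ ≤ ε := by
  obtain ⟨r, hr, hrε⟩ := hV.exists_setOf_le_subset (Metric.closedBall_mem_nhds 0 hε)
  have hm : 0 < min r c := lt_min hr hc
  obtain ⟨δ, hδ, hδm⟩ := Metric.nhds_basis_closedBall.mem_iff.1 (hV.eventually_lt hm)
  refine ⟨δ, hδ, fun χ T hχ hχ0 t ht => mem_closedBall_zero_iff.1 (hrε ?_)⟩
  have hboundary : ∀ x, V x = min r c → lieDeriv V F x < 0 := fun x hx =>
    hneg x (by rintro rfl; exact (hx ▸ hm).ne' hV.isPosDefFn.1) (hx.trans_le (min_le_right _ _))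
  exact (le_of_lieDeriv_neg_of_eq hV.differentiable hboundary hχ
    (hδm (mem_closedBall_zero_iff.2 hχ0)).le t ht).trans (min_le_left _ _)

theorem tendsto_zero (hV : IsLyapunovCandidate V) (hF : Continuous F) (hc : 0 < c)
    (hneg : ∀ x ≠ 0, V x ≤ c → lieDeriv V F x < 0)
    (hχ : ∀ t, s ≤ t → HasDerivAt χ (F (χ t)) t) (hs : V (χ s) ≤ c) :
    Tendsto χ atTop (𝓝 0) := by
  intro U hU
  obtain ⟨r, hr, hrU⟩ := hV.exists_setOf_le_subset hU
  have hm : 0 < min r c := lt_min hr hc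
  have hshell : ∀ x, min r c ≤ V x → V x ≤ c → lieDeriv V F x < 0 := fun x hx hxc =>
    hneg x (by rintro rfl; exact (hm.trans_le hx).ne' hV.isPosDefFn.1) hxc
  exact (eventually_le_of_lieDeriv_neg hV.contDiff (hV.isCompact_setOf_le c) hF (min_le_right r c)
    hshell hχ hs).mono fun t ht => hrU (ht.trans (min_le_left _ _))

end IsLyapunovCandidate

theorem isGAS_of_lieDeriv_neg [FiniteDimensional ℝ E] {ε : ℝ} (hF : ContDiff ℝ 1 F)
    (hV : IsLyapunovCandidate V) (hW : ContDiff ℝ 1 W) (hWp : IsProper W) (hc : 0 < c)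
    (hWV : ∀ x, W x ≤ ε → V x ≤ c) (hVneg : ∀ x ≠ 0, V x ≤ c → lieDeriv V F x < 0)
    (hWneg : ∀ x, ε ≤ W x → lieDeriv W F x < 0) : IsGAS F := by
  have : ProperSpace E := FiniteDimensional.proper ℝ E
  refine ⟨fun _ hη => hV.stable hc hVneg hη, fun x₀ => ?_⟩
  have hcompact := hWp.isCompact_setOf_le hW.continuous (max (W x₀) ε)
  obtain ⟨χ, hχ0, hχ⟩ := exists_forward_solution hF (hW.differentiable one_ne_zero) hcompact
    (fun x hx => hWneg x ((le_max_right _ _).trans_eq hx.symm)) (le_max_left _ _)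
  have hentry : ∀ᶠ t in atTop, W (χ t) ≤ ε :=
    eventually_le_of_lieDeriv_neg hW hcompact hF.continuous (le_max_right _ _)
      (fun x hx _ => hWneg x hx) hχ (hχ0.symm ▸ le_max_left _ _)
  obtain ⟨s, hsε, hs⟩ := (hentry.and (eventually_ge_atTop 0)).exists
  exact ⟨χ, hχ0, hχ, hV.tendsto_zero hF.continuous hc hVneg (fun t ht => hχ t (hs.trans ht))
    (hWV _ hsε)⟩

end Lyapunov

section Linearization

variable {E : Type*} [NormedAddCommGroup E] [NormedSpace ℝ E]

theorem isCoercive_of_pos [FiniteDimensional ℝ E] {β : E →L[ℝ] E →L[ℝ] ℝ}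
    (hβ : ∀ x ≠ 0, 0 < β x x) : IsCoercive β := by
  have : ProperSpace E := FiniteDimensional.proper ℝ E
  obtain ⟨k, hk, hβk⟩ : ∃ k > 0, ∀ x ∈ Metric.sphere (0 : E) 1, k ≤ β x x :=
    (isCompact_sphere (0 : E) 1).exists_forall_le' (by fun_prop)
      fun x hx => hβ x (ne_zero_of_mem_unit_sphere ⟨x, hx⟩)
  refine ⟨k, hk, fun x => ?_⟩
  obtain rfl | hx := eq_or_ne x 0
  · simp
  have hx' : ‖x‖ ≠ 0 := norm_ne_zero_iff.2 hx
  have hunit := hβk (‖x‖⁻¹ • x) (by simp [norm_smul, hx'])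
  calc k * ‖x‖ * ‖x‖ ≤ β (‖x‖⁻¹ • x) (‖x‖⁻¹ • x) * ‖x‖ * ‖x‖ := by gcongr
    _ = β x x := by simp only [map_smul, _root_.smul_apply, smul_eq_mul]; field_simp

variable {V : E → ℝ} {F : E → E} {H : E →L[ℝ] E →L[ℝ] ℝ} {M : E →L[ℝ] E}

theorem isLittleO_lieDeriv_sub (hV : HasFDerivAt (fderiv ℝ V) H 0) (hV0 : fderiv ℝ V 0 = 0)
    (hF : HasFDerivAt F M 0) (hF0 : F 0 = 0) :
    (fun x => lieDeriv V F x - H x (M x)) =o[𝓝 0] fun x => ‖x‖ * ‖x‖ := by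
  have hVo : (fun x => fderiv ℝ V x - H x) =o[𝓝 0] fun x => x := by
    simpa only [hV0, sub_zero] using hV.isLittleO
  have hFo : (fun x => F x - M x) =o[𝓝 0] fun x => x := by
    simpa only [hF0, sub_zero] using hF.isLittleO
  have hFO : F =O[𝓝 0] fun x => x := by
    simpa only [hF0, sub_zero] using hF.isBigO_sub
  have hfirst : (fun x => (fderiv ℝ V x - H x) (F x)) =o[𝓝 0] fun x => ‖x‖ * ‖x‖ :=
    isBoundedBilinearMap_apply.isBigO_comp.trans_isLittleO
      (hVo.norm_norm.mul_isBigO hFO.norm_norm)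
  have hsecond : (fun x => H x (F x - M x)) =o[𝓝 0] fun x => ‖x‖ * ‖x‖ :=
    isBoundedBilinearMap_apply.isBigO_comp.trans_isLittleO
      ((H.isBigO_id _).norm_norm.mul_isLittleO hFo.norm_norm)
  refine (hfirst.add hsecond).congr_left fun x => ?_
  simp only [lieDeriv, _root_.sub_apply, map_sub]
  ring

theorem eventually_lieDeriv_neg [FiniteDimensional ℝ E] (hV : HasFDerivAt (fderiv ℝ V) H 0)
    (hV0 : fderiv ℝ V 0 = 0) (hF : HasFDerivAt F M 0) (hF0 : F 0 = 0)
    (hneg : ∀ x ≠ 0, H x (M x) < 0) : ∀ᶠ x in 𝓝[≠] 0, lieDeriv V F x < 0 := by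
  obtain ⟨k, hk, hcoer⟩ := isCoercive_of_pos (β := -H.bilinearComp (.id ℝ E) M)
    fun x hx => neg_pos.2 (hneg x hx)
  have hsmall := (isLittleO_lieDeriv_sub hV hV0 hF hF0).def (half_pos hk)
  filter_upwards [hsmall.filter_mono nhdsWithin_le_nhds, self_mem_nhdsWithin] with x hx hx0
  have hxx : 0 < ‖x‖ * ‖x‖ := mul_self_pos.2 (norm_ne_zero_iff.2 hx0)
  have hquad : k * ‖x‖ * ‖x‖ ≤ -H x (M x) := hcoer x
  rw [Real.norm_eq_abs, Real.norm_of_nonneg hxx.le] at hx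
  nlinarith [le_of_abs_le hx]

end Linearization

section Feedback

variable {E U : Type*} [NormedAddCommGroup E] [NormedSpace ℝ E]
  [NormedAddCommGroup U] [NormedSpace ℝ U] {a : E → E} {b : E → U →L[ℝ] E} {α κ κu : E → U}
  {V W : E → ℝ}

/-- The vector field of the control-affine system `dχ/dt = a χ + b χ u` under the state feedback
`u = α χ`. -/
def closedLoop (a : E → E) (b : E → U →L[ℝ] E) (α : E → U) (x : E) : E :=
  a x + b x (α x)

theorem contDiff_closedLoop {k : WithTop ℕ∞} (ha : ContDiff ℝ k a) (hb : ContDiff ℝ k b)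
    (hα : ContDiff ℝ k α) : ContDiff ℝ k (closedLoop a b α) :=
  ha.add (hb.clm_apply hα)

theorem hasFDerivAt_closedLoop {a' : E →L[ℝ] E} {α' : E →L[ℝ] U} {x : E} (ha : HasFDerivAt a a' x)
    (hb : DifferentiableAt ℝ b x) (hα : HasFDerivAt α α' x) (hαx : α x = 0) :
    HasFDerivAt (closedLoop a b α) (a' + b x ∘L α') x := by
  refine (ha.add (hb.hasFDerivAt.clm_apply hα)).congr_fderiv ?_
  simp only [hαx, map_zero, add_zero]

/-- The control values that make `V` decrease along `dχ/dt = a χ + b χ u` at the state `x`, so that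
`α x ∈ descentControls a b V x` is by definition `lieDeriv V (closedLoop a b α) x < 0`. -/
def descentControls (a : E → E) (b : E → U →L[ℝ] E) (V : E → ℝ) (x : E) : Set U :=
  {u | fderiv ℝ V x (a x + b x u) < 0}

theorem convex_descentControls (x : E) : Convex ℝ (descentControls a b V x) :=
  ((convex_halfSpace_lt (fderiv ℝ V x).toLinearMap.isLinear 0).translate_preimage_right
    (a x)).linear_preimage (b x).toLinearMap

theorem descentControls_nonempty {x : E}
    (h : (∀ u, fderiv ℝ V x (b x u) = 0) → fderiv ℝ V x (a x) < 0) :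
    (descentControls a b V x).Nonempty := by
  by_cases hb : ∀ u, fderiv ℝ V x (b x u) = 0
  · exact ⟨0, by simpa [descentControls] using h hb⟩
  push Not at hb
  obtain ⟨u, hu⟩ := hb
  refine ⟨(-(fderiv ℝ V x (a x) + 1) / fderiv ℝ V x (b x u)) • u, ?_⟩
  change fderiv ℝ V x _ < 0
  simp only [map_add, map_smul, smul_eq_mul, div_mul_cancel₀ _ hu]
  linarith

theorem eventually_mem_descentControls (hV : ContDiff ℝ 1 V) (ha : Continuous a)
    (hb : Continuous b) {x : E} {u : U} (hu : u ∈ descentControls a b V x) :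
    ∀ᶠ y in 𝓝 x, u ∈ descentControls a b V y :=
  (continuous_lieDeriv hV (ha.add (hb.clm_apply (continuous_const (y := u))))).continuousAt
    |>.eventually_lt_const hu

open scoped Manifold in
theorem exists_contDiff_forall_mem_of_local [FiniteDimensional ℝ E] {k : ℕ∞} {t : E → Set U}
    (ht : ∀ x, Convex ℝ (t x))
    (hloc : ∀ x, ∃ g : E → U, ContDiff ℝ k g ∧ ∀ᶠ y in 𝓝 x, g y ∈ t y) :
    ∃ g : E → U, ContDiff ℝ k g ∧ ∀ x, g x ∈ t x := by
  obtain ⟨g, hg⟩ := exists_contMDiffMap_forall_mem_convex_of_local 𝓘(ℝ, E) (n := k) ht fun x =>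
    let ⟨g, hg, hgt⟩ := hloc x
    ⟨_, hgt, g, hg.contMDiff.contMDiffOn, fun _ => id⟩
  exact ⟨g, g.contMDiff.contDiff, hg⟩

theorem exists_contDiff_feedback [FiniteDimensional ℝ E] {k : ℕ∞} {c δ ε R : ℝ}
    (ha : Continuous a) (hb : Continuous b) (hV : Continuous V) (hW : ContDiff ℝ 1 W)
    (hκ : ContDiff ℝ k κ) (hκu : ContDiff ℝ k κu) (hδ : W 0 ≤ δ) (hδε : δ < ε)
    (hcR : ∀ x, V x ≤ c → W x < R)
    (hκV : ∀ x ≠ 0, V x ≤ c → lieDeriv V (closedLoop a b κ) x < 0)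
    (hκuV : ∀ x ≠ 0, V x ≤ c → lieDeriv V (closedLoop a b κu) x < 0)
    (hκuW : ∀ x ≠ 0, W x < R → lieDeriv W (closedLoop a b κu) x < 0)
    (hclf : ∀ x ≠ 0, (descentControls a b W x).Nonempty) :
    ∃ α : E → U, ContDiff ℝ k α ∧ (∀ x, W x ≤ δ → α x = κ x) ∧
      (∀ x ≠ 0, V x ≤ c → lieDeriv V (closedLoop a b α) x < 0) ∧
      (∀ x, ε ≤ W x → lieDeriv W (closedLoop a b α) x < 0) := by
  have hne : ∀ x, δ < W x → x ≠ 0 := by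
    rintro _ hx rfl
    exact hδ.not_gt hx
  obtain ⟨α, hα, hαt⟩ := exists_contDiff_forall_mem_of_local (k := k)
    (t := fun x => (⋂ _ : W x ≤ δ, {κ x}) ∩ (⋂ _ : x ≠ 0, ⋂ _ : V x ≤ c, descentControls a b V x) ∩
      ⋂ _ : ε ≤ W x, descentControls a b W x)
    (fun x => ((convex_iInter fun _ => convex_singleton _).inter (convex_iInter fun _ =>
      convex_iInter fun _ => convex_descentControls x)).inter
      (convex_iInter fun _ => convex_descentControls x)) fun x => by
    simp only [Set.mem_inter_iff, Set.mem_iInter, Set.mem_singleton_iff, and_assoc]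
    by_cases hxε : W x < ε
    · refine ⟨κ, hκ, ?_⟩
      filter_upwards [hW.continuous.continuousAt.eventually_lt_const hxε] with y hy
      exact ⟨fun _ => rfl, hκV y, fun h => absurd hy h.not_gt⟩
    have hxδ : δ < W x := hδε.trans_le (not_lt.1 hxε)
    have hyδ : ∀ᶠ y in 𝓝 x, δ < W y := hW.continuous.continuousAt.eventually_const_lt hxδ
    by_cases hxR : W x < R
    · refine ⟨κu, hκu, ?_⟩
      filter_upwards [hyδ, hW.continuous.continuousAt.eventually_lt_const hxR] with y hδy hyR
      exact ⟨fun h => absurd hδy h.not_gt, hκuV y, fun _ => hκuW y (hne y hδy) hyR⟩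
    · obtain ⟨u, hu⟩ := hclf x (hne x hxδ)
      have hxc : c < V x := not_le.1 fun h => hxR (hcR x h)
      refine ⟨fun _ => u, contDiff_const, ?_⟩
      filter_upwards [hyδ, hV.continuousAt.eventually_const_lt hxc,
        eventually_mem_descentControls hW ha hb hu] with y hδy hcy huy
      exact ⟨fun h => absurd hδy h.not_gt, fun _ h => absurd hcy h.not_gt, fun _ => huy⟩
  simp only [Set.mem_inter_iff, Set.mem_iInter, Set.mem_singleton_iff] at hαt
  exact ⟨α, hα, fun x => (hαt x).1.1, fun x => (hαt x).1.2, fun x => (hαt x).2⟩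

theorem exists_contDiff_feedback_isGAS [FiniteDimensional ℝ E] {k : ℕ∞} (hk : 1 ≤ k)
    (ha : ContDiff ℝ 1 a) (hb : ContDiff ℝ 1 b) (hV : IsLyapunovCandidate V)
    (hW : IsLyapunovCandidate W) (hκ : ContDiff ℝ k κ) (hκu : ContDiff ℝ k κu)
    (hclf : ∀ x ≠ 0, (descentControls a b W x).Nonempty)
    (hκV : ∀ᶠ x in 𝓝[≠] 0, lieDeriv V (closedLoop a b κ) x < 0)
    (hκuV : ∀ᶠ x in 𝓝[≠] 0, lieDeriv V (closedLoop a b κu) x < 0)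
    (hκuW : ∀ᶠ x in 𝓝[≠] 0, lieDeriv W (closedLoop a b κu) x < 0) :
    ∃ α : E → U, ContDiff ℝ k α ∧ α =ᶠ[𝓝 0] κ ∧ IsGAS (closedLoop a b α) := by
  obtain ⟨R, hR, hRκu⟩ := hW.exists_setOf_le_subset (eventually_nhdsWithin_iff.1 hκuW)
  obtain ⟨c, hc, hcV⟩ := hV.exists_setOf_le_subset
    ((eventually_nhdsWithin_iff.1 (hκV.and hκuV)).and (hW.eventually_lt hR))
  obtain ⟨ε, hε, hεc⟩ := hW.exists_setOf_le_subset (hV.eventually_lt hc)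
  obtain ⟨δ, hδ, hδε⟩ := exists_between hε
  obtain ⟨α, hα, hακ, hαV, hαW⟩ := exists_contDiff_feedback ha.continuous hb.continuous
    hV.contDiff.continuous hW.contDiff hκ hκu (hW.isPosDefFn.1.trans_le hδ.le) hδε
    (fun x hx => (hcV hx).2) (fun x hx0 hx => ((hcV hx).1 hx0).1)
    (fun x hx0 hx => ((hcV hx).1 hx0).2) (fun x hx0 hx => hRκu hx.le hx0) hclf
  refine ⟨α, hα, (hW.eventually_lt hδ).mono fun x hx => hακ x hx.le, ?_⟩
  exact isGAS_of_lieDeriv_neg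
    (contDiff_closedLoop ha hb (hα.of_le (by exact_mod_cast hk))) hV hW.contDiff hW.isProper hc
    (fun x hx => (hεc hx).le) hαV hαW

end Feedback

section QuadraticForm

variable {E : Type*} [NormedAddCommGroup E] [NormedSpace ℝ E]

theorem hasFDerivAt_apply_self (β : E →L[ℝ] E →L[ℝ] ℝ) (x : E) :
    HasFDerivAt (fun x => β x x) (β x + β.flip x) x :=
  (β.hasFDerivAt.clm_apply (hasFDerivAt_id x)).congr_fderiv rfl

theorem fderiv_fderiv_apply_self (β : E →L[ℝ] E →L[ℝ] ℝ) (x : E) :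
    fderiv ℝ (fderiv ℝ fun x => β x x) x = β + β.flip := by
  rw [funext fun x => (hasFDerivAt_apply_self β x).fderiv]
  exact (β + β.flip).fderiv

theorem isLyapunovCandidate_of_isCoercive {β : E →L[ℝ] E →L[ℝ] ℝ} (hβ : IsCoercive β) :
    IsLyapunovCandidate fun x => β x x := by
  obtain ⟨k, hk, hβk⟩ := hβ
  have hnorm : Tendsto (fun x : E => ‖x‖) (Bornology.cobounded E) atTop :=
    tendsto_norm_cobounded_atTop
  refine ⟨β.contDiff.clm_apply contDiff_id, ?_, by simp, fun x hx => ?_⟩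
  · exact tendsto_atTop_mono hβk ((hnorm.const_mul_atTop hk).atTop_mul_atTop₀ hnorm)
  · have hkx : 0 < k * ‖x‖ * ‖x‖ := by positivity
    exact hkx.trans_le (hβk x)

end QuadraticForm

section MulVec

variable {ι κ : Type*} [Fintype ι] [DecidableEq ι]

/-- The continuous linear map `v ↦ M *ᵥ v`. -/
def mulVecCLM (M : Matrix κ ι ℝ) : (ι → ℝ) →L[ℝ] κ → ℝ :=
  LinearMap.toContinuousLinearMap (Matrix.toLin' M)

theorem mulVecCLM_of_single (m : κ → ι → ℝ) (i : ι) :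
    mulVecCLM (Matrix.of m) (Pi.single i 1) = fun k => m k i :=
  Matrix.mulVec_single_one _ _

theorem contDiff_mulVecCLM [Fintype κ] {E : Type*} [NormedAddCommGroup E] [NormedSpace ℝ E]
    {k : WithTop ℕ∞} {b : E → κ → ι → ℝ} (hb : ContDiff ℝ k b) :
    ContDiff ℝ k fun x => mulVecCLM (Matrix.of (b x)) := by
  refine contDiff_clm_apply_iff.2 fun v => contDiff_pi.2 fun i => ?_
  change ContDiff ℝ k fun x => ∑ j, b x i j * v j
  fun_prop

end MulVec

section LyapunovInequality

variable {n p : ℕ} {P Q M : Matrix (Fin n) (Fin n) ℝ} {V : (Fin n → ℝ) → ℝ}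

theorem hessianAt_apply (V : (Fin n → ℝ) → ℝ) (x : Fin n → ℝ) (i j : Fin n) :
    hessianAt V x i j = fderiv ℝ (fderiv ℝ V) x (Pi.single i 1) (Pi.single j 1) := by
  simp [hessianAt, iteratedFDeriv_two_apply]

theorem dotProduct_hessianAt_mulVec (V : (Fin n → ℝ) → ℝ) (x v w : Fin n → ℝ) :
    v ⬝ᵥ hessianAt V x *ᵥ w = fderiv ℝ (fderiv ℝ V) x v w := by
  have hbilin : Matrix.toLinearMap₂' ℝ (hessianAt V x) =
      (fderiv ℝ (fderiv ℝ V) x).toLinearMap₁₂ :=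
    LinearMap.ext_basis (Pi.basisFun ℝ (Fin n)) (Pi.basisFun ℝ (Fin n)) fun i j => by
      simp [Matrix.toLinearMap₂'_apply', hessianAt_apply]
  rw [← Matrix.toLinearMap₂'_apply', hbilin]
  rfl

theorem isSymm_hessianAt {x : Fin n → ℝ} (hV : ContDiffAt ℝ 2 V x) :
    (hessianAt V x).IsSymm := by
  refine Matrix.IsSymm.ext fun i j => ?_
  simp only [hessianAt_apply]
  exact hV.isSymmSndFDerivAt (by simp) _ _

theorem dotProduct_mulVec_mulVec_neg (hQ : Q.IsSymm) (h : (-(Mᵀ * Q + Q * M)).PosDef)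
    {x : Fin n → ℝ} (hx : x ≠ 0) : x ⬝ᵥ Q *ᵥ (M *ᵥ x) < 0 := by
  have hsymm : x ⬝ᵥ (Mᵀ * Q) *ᵥ x = x ⬝ᵥ (Q * M) *ᵥ x := by
    rw [← Matrix.dotProduct_transpose_mulVec, Matrix.transpose_mul, Matrix.transpose_transpose,
      hQ.eq]
  have hpos := h.dotProduct_mulVec_pos hx
  simp only [star_trivial, Matrix.neg_mulVec, Matrix.add_mulVec, dotProduct_neg, dotProduct_add,
    hsymm] at hpos
  rw [Matrix.mulVec_mulVec]
  linarith

theorem eventually_lieDeriv_neg_of_posDef {F : (Fin n → ℝ) → Fin n → ℝ} (hV : ContDiff ℝ 2 V)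
    (hV0 : fderiv ℝ V 0 = 0) (hF : HasFDerivAt F (mulVecCLM M) 0) (hF0 : F 0 = 0)
    (h : (-(Mᵀ * ((1 / 2 : ℝ) • hessianAt V 0) + ((1 / 2 : ℝ) • hessianAt V 0) * M)).PosDef) :
    ∀ᶠ x in 𝓝[≠] 0, lieDeriv V F x < 0 := by
  have hV' : HasFDerivAt (fderiv ℝ V) (fderiv ℝ (fderiv ℝ V) 0) 0 :=
    ((hV.fderiv_right (m := 1) le_rfl).differentiable one_ne_zero 0).hasFDerivAt
  refine eventually_lieDeriv_neg hV' hV0 hF hF0 fun x hx => ?_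
  have hsymm := (isSymm_hessianAt (x := 0) hV.contDiffAt).smul (1 / 2 : ℝ)
  have hhalf := dotProduct_mulVec_mulVec_neg hsymm h hx
  rw [Matrix.smul_mulVec, dotProduct_smul, dotProduct_hessianAt_mulVec, smul_eq_mul] at hhalf
  exact (pos_iff_neg_of_mul_neg hhalf).1 one_half_pos

theorem hasFDerivAt_closedLoop_mulVecCLM {a : (Fin n → ℝ) → Fin n → ℝ}
    {b : (Fin n → ℝ) → Fin n → Fin p → ℝ} {A : Matrix (Fin n) (Fin n) ℝ}
    (ha : DifferentiableAt ℝ a 0) (hA : ∀ v, fderiv ℝ a 0 v = A *ᵥ v)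
    (hb : ContDiff ℝ 1 b) (L : Matrix (Fin p) (Fin n) ℝ) :
    HasFDerivAt (closedLoop a (fun x => mulVecCLM (Matrix.of (b x))) (mulVecCLM L))
      (mulVecCLM (A + Matrix.of (b 0) * L)) 0 := by
  refine (hasFDerivAt_closedLoop ha.hasFDerivAt
    ((contDiff_mulVecCLM hb).differentiable one_ne_zero 0) (mulVecCLM L).hasFDerivAt
    (map_zero _)).congr_fderiv ?_
  ext1 v
  simp [hA, mulVecCLM]

theorem eventually_lieDeriv_closedLoop_neg_of_posDef {a : (Fin n → ℝ) → Fin n → ℝ}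
    {b : (Fin n → ℝ) → Fin n → Fin p → ℝ} {A : Matrix (Fin n) (Fin n) ℝ}
    {L : Matrix (Fin p) (Fin n) ℝ} (ha : DifferentiableAt ℝ a 0) (ha0 : a 0 = 0)
    (hA : ∀ v, fderiv ℝ a 0 v = A *ᵥ v) (hb : ContDiff ℝ 1 b) (hV : ContDiff ℝ 2 V)
    (hV0 : fderiv ℝ V 0 = 0)
    (h : (-((A + Matrix.of (b 0) * L)ᵀ * ((1 / 2 : ℝ) • hessianAt V 0) +
      ((1 / 2 : ℝ) • hessianAt V 0) * (A + Matrix.of (b 0) * L))).PosDef) :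
    ∀ᶠ x in 𝓝[≠] 0,
      lieDeriv V (closedLoop a (fun x => mulVecCLM (Matrix.of (b x))) (mulVecCLM L)) x < 0 :=
  eventually_lieDeriv_neg_of_posDef hV hV0 (hasFDerivAt_closedLoop_mulVecCLM ha hA hb L)
    (by simp [closedLoop, ha0]) h

/-- The quadratic form `x ↦ xᵀ P x`, the Lyapunov function associated with the matrix `P`. -/
def quadForm (P : Matrix (Fin n) (Fin n) ℝ) (x : Fin n → ℝ) : ℝ :=
  x ⬝ᵥ P *ᵥ x

theorem quadForm_eq_toContinuousBilinearMap (P : Matrix (Fin n) (Fin n) ℝ) :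
    quadForm P = fun x => (Matrix.toLinearMap₂' ℝ P).toContinuousBilinearMap x x :=
  funext fun x => (Matrix.toLinearMap₂'_apply' P x x).symm

theorem contDiff_quadForm (P : Matrix (Fin n) (Fin n) ℝ) {k : WithTop ℕ∞} :
    ContDiff ℝ k (quadForm P) := by
  rw [quadForm_eq_toContinuousBilinearMap]
  exact (ContinuousLinearMap.contDiff _).clm_apply contDiff_id

theorem isLyapunovCandidate_quadForm (hP : P.PosDef) : IsLyapunovCandidate (quadForm P) := by
  rw [quadForm_eq_toContinuousBilinearMap]
  refine isLyapunovCandidate_of_isCoercive (isCoercive_of_pos fun x hx => ?_)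
  simpa only [LinearMap.toContinuousBilinearMap_apply, Matrix.toLinearMap₂'_apply', star_trivial]
    using hP.dotProduct_mulVec_pos hx

theorem hessianAt_quadForm (P : Matrix (Fin n) (Fin n) ℝ) (x : Fin n → ℝ) :
    hessianAt (quadForm P) x = P + Pᵀ := by
  ext i j
  rw [hessianAt_apply, quadForm_eq_toContinuousBilinearMap, fderiv_fderiv_apply_self]
  simp [Matrix.toLinearMap₂'_apply']

theorem half_smul_hessianAt_quadForm (hP : P.IsSymm) (x : Fin n → ℝ) :
    (1 / 2 : ℝ) • hessianAt (quadForm P) x = P := by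
  rw [hessianAt_quadForm, hP.eq, ← two_smul ℝ P, smul_smul]
  norm_num

end LyapunovInequality

/-- uniting via matrix inequalities. If `V∞` is a `C²` proper positive
definite global CLF with positive definite half-Hessian `P∞ := ½ H(V∞)(0)`, `A + BK` is
Hurwitz, and there are `K_u` and a positive definite `P` making the three Lyapunov
matrix expressions negative definite, then there is a smooth feedback `α₀` with
`α₀ 0 = 0` and `Dα₀(0) = K` rendering the origin globally asymptotically stable. -/
theorem stmt3 {n p : ℕ}
    (a : (Fin n → ℝ) → (Fin n → ℝ)) (b : (Fin n → ℝ) → Fin n → Fin p → ℝ)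
    (A : Matrix (Fin n) (Fin n) ℝ) (B : Matrix (Fin n) (Fin p) ℝ)
    (K Ku : Matrix (Fin p) (Fin n) ℝ) (P : Matrix (Fin n) (Fin n) ℝ)
    (ha : ContDiff ℝ 1 a) (ha0 : a 0 = 0)
    (hA : ∀ v, fderiv ℝ a 0 v = A.mulVec v)
    (hb : ContDiff ℝ 1 b) (hB : B = Matrix.of (b 0))
    (Vinf : (Fin n → ℝ) → ℝ)
    (hVinf : ContDiff ℝ 2 Vinf) (hVinfnonneg : ∀ χ, 0 ≤ Vinf χ)
    (hVinfproper : IsProper Vinf) (hVinfpos : IsPosDefFn Vinf)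
    (hArtstein : ∀ χ : Fin n → ℝ, χ ≠ 0 →
        (∀ i, fderiv ℝ Vinf χ (fun k => b χ k i) = 0) → fderiv ℝ Vinf χ (a χ) < 0)
    (hPinf : (((1:ℝ)/2) • hessianAt Vinf 0).PosDef)
    (hHurwitz : Hurwitz (A + B * K))
    (hP : P.PosDef)
    (hIneq1 : (-((A + B * K)ᵀ * P + P * (A + B * K))).PosDef)
    (hIneq2 : (-((A + B * Ku)ᵀ * P + P * (A + B * Ku))).PosDef)
    (hIneq3 : (-((A + B * Ku)ᵀ * (((1:ℝ)/2) • hessianAt Vinf 0)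
        + (((1:ℝ)/2) • hessianAt Vinf 0) * (A + B * Ku))).PosDef) :
    ∃ α₀ : (Fin n → ℝ) → (Fin p → ℝ), ContDiff ℝ (⊤ : ℕ∞) α₀ ∧ α₀ 0 = 0 ∧
      (∀ v, fderiv ℝ α₀ 0 v = K.mulVec v) ∧
      IsGAS (fun χ => a χ + (Matrix.of (b χ)).mulVec (α₀ χ)) := by
  subst hB
  let g : (Fin n → ℝ) → (Fin p → ℝ) →L[ℝ] Fin n → ℝ := fun χ => mulVecCLM (Matrix.of (b χ))
  have hclf : ∀ χ ≠ 0, (descentControls a g Vinf χ).Nonempty := fun χ hχ =>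
    descentControls_nonempty fun h => hArtstein χ hχ fun i =>
      mulVecCLM_of_single (b χ) i ▸ h (Pi.single i 1)
  have hVinf' : IsLyapunovCandidate Vinf := ⟨hVinf.of_le one_le_two, hVinfproper, hVinfpos⟩
  have hVP : IsLyapunovCandidate (quadForm P) := isLyapunovCandidate_quadForm hP
  have ha' : DifferentiableAt ℝ a 0 := ha.differentiable one_ne_zero 0
  rw [← half_smul_hessianAt_quadForm (Matrix.isHermitian_iff_isSymm.1 hP.isHermitian) 0]
    at hIneq1 hIneq2
  obtain ⟨α, hα, hαK, hGAS⟩ := exists_contDiff_feedback_isGAS (a := a) (b := g) le_top ha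
    (contDiff_mulVecCLM hb) hVP hVinf' (mulVecCLM K).contDiff (mulVecCLM Ku).contDiff hclf
    (eventually_lieDeriv_closedLoop_neg_of_posDef ha' ha0 hA hb (contDiff_quadForm P)
      hVP.fderiv_zero hIneq1)
    (eventually_lieDeriv_closedLoop_neg_of_posDef ha' ha0 hA hb (contDiff_quadForm P)
      hVP.fderiv_zero hIneq2)
    (eventually_lieDeriv_closedLoop_neg_of_posDef ha' ha0 hA hb hVinf hVinf'.fderiv_zero hIneq3)
  refine ⟨α, hα, hαK.self_of_nhds.trans (map_zero _), fun v => ?_, hGAS⟩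
  rw [hαK.fderiv_eq, ContinuousLinearMap.fderiv]
  rfl
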